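/- Let γ: U → Mₙ(ℂ) and G: U → GL_{2n}(ℂ) be differentiable (in the real sense), let N(γ) denote the 2n×2n block matrix [[0,0],[γ,0]], and set G̃ := (I − N(conj γ))·G·(I + N(γ)), where conj is entrywise conjugation. Then G̃ takes values in GL_{2n}(ℂ) and for every i the Christoffel matrices transform as: G̃⁻¹·∂ᵢG̃ = (I − N(γ))·( −G⁻¹·N(∂ᵢ(conj γ))·G + G⁻¹·∂ᵢG )·(I + N(γ)) + N(∂ᵢγ). -/

import Mathlib

open Matrix

noncomputable section

/-- The Wirtinger derivative `∂ᵢ f = ½(∂f/∂xᵢ − i·∂f/∂yᵢ)` of a function `f : ℂⁿ → ℂ`,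
computed via the real Fréchet derivative. -/
def wd {n : ℕ} (i : Fin n) (f : (Fin n → ℂ) → ℂ) (z : Fin n → ℂ) : ℂ :=
  (fderiv ℝ f z (Pi.single i 1) - Complex.I * fderiv ℝ f z (Pi.single i Complex.I)) / 2

/-- The conjugate Wirtinger derivative `∂_{ī} f = ½(∂f/∂xᵢ + i·∂f/∂yᵢ)`. -/
def wdb {n : ℕ} (i : Fin n) (f : (Fin n → ℂ) → ℂ) (z : Fin n → ℂ) : ℂ :=
  (fderiv ℝ f z (Pi.single i 1) + Complex.I * fderiv ℝ f z (Pi.single i Complex.I)) / 2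

/-- Entrywise Wirtinger derivative of a matrix-valued map. -/
def wdM {n : ℕ} {ι κ : Type*} (i : Fin n) (A : (Fin n → ℂ) → Matrix ι κ ℂ)
    (z : Fin n → ℂ) : Matrix ι κ ℂ :=
  Matrix.of fun a b => wd i (fun w => A w a b) z

/-- Entrywise conjugate Wirtinger derivative of a matrix-valued map. -/
def wdbM {n : ℕ} {ι κ : Type*} (i : Fin n) (A : (Fin n → ℂ) → Matrix ι κ ℂ)
    (z : Fin n → ℂ) : Matrix ι κ ℂ :=
  Matrix.of fun a b => wdb i (fun w => A w a b) z

/-- The block matrix `N(γ) = [[0,0],[γ,0]]`. -/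
def Nmat {n : ℕ} (γ : Matrix (Fin n) (Fin n) ℂ) :
    Matrix (Fin n ⊕ Fin n) (Fin n ⊕ Fin n) ℂ :=
  Matrix.fromBlocks 0 0 γ 0

/-!
The logarithmic derivative `H ↦ H⁻¹ ∂ᵢH` satisfies the gauge rule
`(AB)⁻¹ ∂ᵢ(AB) = B⁻¹ (A⁻¹ ∂ᵢA) B + B⁻¹ ∂ᵢB`. Applying it twice to `(I - N(β)) G (I + N(γ))` leaves
the logarithmic derivatives of the two unipotent factors, and these are `-N(∂ᵢβ)` and `N(∂ᵢγ)`
because every product `N(a) N(b)` vanishes.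
-/

section EntrywiseDifferentiability

variable {𝕜 E R ι κ μ : Type*} [NontriviallyNormedField 𝕜] [NormedAddCommGroup E]
  [NormedSpace 𝕜 E]

theorem differentiableAt_matrix_mul_apply [NormedRing R] [NormedAlgebra 𝕜 R] [Fintype κ]
    {A : E → Matrix ι κ R} {B : E → Matrix κ μ R} {z : E}
    (hA : ∀ a b, DifferentiableAt 𝕜 (fun w => A w a b) z)
    (hB : ∀ a b, DifferentiableAt 𝕜 (fun w => B w a b) z) (a : ι) (b : μ) :
    DifferentiableAt 𝕜 (fun w => (A w * B w) a b) z := by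
  simp only [Matrix.mul_apply]
  exact DifferentiableAt.fun_sum fun c _ => (hA a c).mul (hB c b)

theorem differentiableAt_Nmat_apply [NormedSpace 𝕜 ℂ] {n : ℕ}
    {γ : E → Matrix (Fin n) (Fin n) ℂ} {z : E}
    (hγ : ∀ a b, DifferentiableAt 𝕜 (fun w => γ w a b) z) :
    ∀ a b, DifferentiableAt 𝕜 (fun w => Nmat (γ w) a b) z := by
  rintro (_ | _) (_ | _) <;> simp [Nmat, hγ]

end EntrywiseDifferentiability

section Wirtinger

variable {m : ℕ} {ι κ μ : Type*} (i : Fin m) {z : Fin m → ℂ}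

theorem wd_fun_sum {s : Finset ι} {f : ι → (Fin m → ℂ) → ℂ}
    (hf : ∀ k ∈ s, DifferentiableAt ℝ (f k) z) :
    wd i (fun w => ∑ k ∈ s, f k w) z = ∑ k ∈ s, wd i (f k) z := by
  simp only [wd, fderiv_fun_sum hf, _root_.sum_apply, Finset.mul_sum,
    ← Finset.sum_sub_distrib, Finset.sum_div]

theorem wd_fun_mul {f g : (Fin m → ℂ) → ℂ} (hf : DifferentiableAt ℝ f z)
    (hg : DifferentiableAt ℝ g z) :
    wd i (fun w => f w * g w) z = wd i f z * g z + f z * wd i g z := by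
  simp only [wd, fderiv_fun_mul hf hg, _root_.add_apply, _root_.smul_apply, smul_eq_mul]
  ring

theorem wdM_fun_mul [Fintype κ] {A : (Fin m → ℂ) → Matrix ι κ ℂ} {B : (Fin m → ℂ) → Matrix κ μ ℂ}
    (hA : ∀ a b, DifferentiableAt ℝ (fun w => A w a b) z)
    (hB : ∀ a b, DifferentiableAt ℝ (fun w => B w a b) z) :
    wdM i (fun w => A w * B w) z = wdM i A z * B z + A z * wdM i B z := by
  ext a b
  simp only [wdM, Matrix.of_apply, Matrix.add_apply, Matrix.mul_apply]
  rw [wd_fun_sum i fun c _ => (hA a c).fun_mul (hB c b), ← Finset.sum_add_distrib]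
  exact Finset.sum_congr rfl fun c _ => wd_fun_mul i (hA a c) (hB c b)

variable (z)

theorem wdM_const_add (C : Matrix ι κ ℂ) (A : (Fin m → ℂ) → Matrix ι κ ℂ) :
    wdM i (fun w => C + A w) z = wdM i A z := by
  ext a b
  simp [wdM, wd]

theorem wdM_const_sub (C : Matrix ι κ ℂ) (A : (Fin m → ℂ) → Matrix ι κ ℂ) :
    wdM i (fun w => C - A w) z = -wdM i A z := by
  ext a b
  simp only [wdM, wd, Matrix.of_apply, Matrix.sub_apply, Matrix.neg_apply, fderiv_const_sub,
    _root_.neg_apply]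
  ring

theorem wdM_Nmat {n : ℕ} (γ : (Fin m → ℂ) → Matrix (Fin n) (Fin n) ℂ) :
    wdM i (fun w => Nmat (γ w)) z = Nmat (wdM i γ z) := by
  ext (a | a) (b | b) <;> simp [Nmat, wdM, wd]

end Wirtinger

section Unipotent

variable {n : ℕ}

theorem Nmat_mul_Nmat (a b : Matrix (Fin n) (Fin n) ℂ) : Nmat a * Nmat b = 0 := by
  simp [Nmat, Matrix.fromBlocks_multiply]

theorem isNilpotent_Nmat (a : Matrix (Fin n) (Fin n) ℂ) : IsNilpotent (Nmat a) :=
  ⟨2, by rw [sq, Nmat_mul_Nmat]⟩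

theorem inv_one_add_Nmat (a : Matrix (Fin n) (Fin n) ℂ) : (1 + Nmat a)⁻¹ = 1 - Nmat a :=
  Matrix.inv_eq_left_inv (by simp [sub_mul, mul_add, Nmat_mul_Nmat])

theorem inv_one_sub_Nmat (a : Matrix (Fin n) (Fin n) ℂ) : (1 - Nmat a)⁻¹ = 1 + Nmat a :=
  Matrix.inv_eq_left_inv (by simp [mul_sub, add_mul, Nmat_mul_Nmat])

end Unipotent

section Christoffel

variable {m n : ℕ} {ι : Type*} [Fintype ι] [DecidableEq ι] (i : Fin m)

/-- The Christoffel matrix `H⁻¹ ∂ᵢH` of a matrix field `H` in direction `i`. It is meaningful only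
where `H` is invertible and its entries are real-differentiable: `⁻¹` and `fderiv` take the junk
value `0` elsewhere. -/
def christoffel (H : (Fin m → ℂ) → Matrix ι ι ℂ) (z : Fin m → ℂ) : Matrix ι ι ℂ :=
  (H z)⁻¹ * wdM i H z

theorem christoffel_fun_mul {A B : (Fin m → ℂ) → Matrix ι ι ℂ} {z : Fin m → ℂ}
    (hA : ∀ a b, DifferentiableAt ℝ (fun w => A w a b) z)
    (hB : ∀ a b, DifferentiableAt ℝ (fun w => B w a b) z) (hAinv : IsUnit (A z)) :
    christoffel i (fun w => A w * B w) z =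
      (B z)⁻¹ * christoffel i A z * B z + christoffel i B z := by
  have hcancel : (A z)⁻¹ * A z = 1 :=
    Matrix.nonsing_inv_mul _ ((Matrix.isUnit_iff_isUnit_det _).1 hAinv)
  calc christoffel i (fun w => A w * B w) z
      = (B z)⁻¹ * (A z)⁻¹ * (wdM i A z * B z + A z * wdM i B z) := by
        rw [christoffel, wdM_fun_mul i hA hB, Matrix.mul_inv_rev]
    _ = (B z)⁻¹ * ((A z)⁻¹ * wdM i A z) * B z + (B z)⁻¹ * ((A z)⁻¹ * A z) * wdM i B z := by
        noncomm_ring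
    _ = (B z)⁻¹ * christoffel i A z * B z + christoffel i B z := by
        rw [hcancel, mul_one, christoffel, christoffel]

theorem christoffel_one_add_Nmat (γ : (Fin m → ℂ) → Matrix (Fin n) (Fin n) ℂ) (z : Fin m → ℂ) :
    christoffel i (fun w => 1 + Nmat (γ w)) z = Nmat (wdM i γ z) := by
  rw [christoffel, inv_one_add_Nmat, wdM_const_add, wdM_Nmat, sub_mul, Nmat_mul_Nmat, one_mul,
    sub_zero]

theorem christoffel_one_sub_Nmat (γ : (Fin m → ℂ) → Matrix (Fin n) (Fin n) ℂ) (z : Fin m → ℂ) :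
    christoffel i (fun w => 1 - Nmat (γ w)) z = -Nmat (wdM i γ z) := by
  rw [christoffel, inv_one_sub_Nmat, wdM_const_sub, wdM_Nmat, mul_neg, add_mul, Nmat_mul_Nmat,
    one_mul, add_zero]

end Christoffel

theorem christoffel_bField_general {m n : ℕ} {β γ : (Fin m → ℂ) → Matrix (Fin n) (Fin n) ℂ}
    {G : (Fin m → ℂ) → Matrix (Fin n ⊕ Fin n) (Fin n ⊕ Fin n) ℂ} {z : Fin m → ℂ}
    (hβ : ∀ a b, DifferentiableAt ℝ (fun w => β w a b) z)
    (hγ : ∀ a b, DifferentiableAt ℝ (fun w => γ w a b) z)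
    (hG : ∀ a b, DifferentiableAt ℝ (fun w => G w a b) z) (hGinv : IsUnit (G z)) :
    IsUnit ((1 - Nmat (β z)) * G z * (1 + Nmat (γ z))) ∧
    ∀ i : Fin m,
      christoffel i (fun w => (1 - Nmat (β w)) * G w * (1 + Nmat (γ w))) z =
        (1 - Nmat (γ z)) * (-((G z)⁻¹ * Nmat (wdM i β z) * G z) + christoffel i G z) *
            (1 + Nmat (γ z)) +
          Nmat (wdM i γ z) := by
  have hL : ∀ a b, DifferentiableAt ℝ (fun w => (1 - Nmat (β w)) a b) z := fun a b =>
    (differentiableAt_Nmat_apply hβ a b).const_sub _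
  have hR : ∀ a b, DifferentiableAt ℝ (fun w => (1 + Nmat (γ w)) a b) z := fun a b =>
    (differentiableAt_Nmat_apply hγ a b).const_add _
  have hLinv : IsUnit (1 - Nmat (β z)) := (isNilpotent_Nmat _).isUnit_one_sub
  have hRinv : IsUnit (1 + Nmat (γ z)) := (isNilpotent_Nmat _).isUnit_one_add
  refine ⟨(hLinv.mul hGinv).mul hRinv, fun i => ?_⟩
  rw [christoffel_fun_mul i (differentiableAt_matrix_mul_apply hL hG) hR (hLinv.mul hGinv),
    christoffel_fun_mul i hL hG hLinv, christoffel_one_sub_Nmat, christoffel_one_add_Nmat,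
    inv_one_add_Nmat, mul_neg, neg_mul]

/-- transformation rule for Christoffel matrices under a B-field
transformation `G̃ = (I − N(conj γ))·G·(I + N(γ))`:
`G̃` is invertible and
`G̃⁻¹·∂ᵢG̃ = (I − N(γ))·(−G⁻¹·N(∂ᵢ(conj γ))·G + G⁻¹·∂ᵢG)·(I + N(γ)) + N(∂ᵢγ)`. -/
theorem christoffel_bField {n : ℕ} (hn : 0 < n)
    (U : Set (Fin n → ℂ)) (hU : IsOpen U)
    (γ : (Fin n → ℂ) → Matrix (Fin n) (Fin n) ℂ)
    (G : (Fin n → ℂ) → Matrix (Fin n ⊕ Fin n) (Fin n ⊕ Fin n) ℂ)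
    (hγdiff : ∀ a b : Fin n, DifferentiableOn ℝ (fun z => γ z a b) U)
    (hGdiff : ∀ A B : Fin n ⊕ Fin n, DifferentiableOn ℝ (fun z => G z A B) U)
    (hGinv : ∀ z ∈ U, IsUnit (G z)) :
    (∀ z ∈ U, IsUnit ((1 - Nmat ((γ z).map (starRingEnd ℂ))) * G z * (1 + Nmat (γ z)))) ∧
    (∀ z ∈ U, ∀ i : Fin n,
      (((1 - Nmat ((γ z).map (starRingEnd ℂ))) * G z * (1 + Nmat (γ z)))⁻¹ *
          wdM i (fun w => (1 - Nmat ((γ w).map (starRingEnd ℂ))) * G w * (1 + Nmat (γ w))) z) =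
        (1 - Nmat (γ z)) *
            (-((G z)⁻¹ * Nmat (wdM i (fun w => (γ w).map (starRingEnd ℂ)) z) * G z) +
              (G z)⁻¹ * wdM i G z) * (1 + Nmat (γ z)) +
          Nmat (wdM i γ z)) := by
  rw [← forall₂_and]
  intro z hz
  have hγ a b := (hγdiff a b).differentiableAt (hU.mem_nhds hz)
  have hG a b := (hGdiff a b).differentiableAt (hU.mem_nhds hz)
  exact christoffel_bField_general (β := fun w => (γ w).map (starRingEnd ℂ))
    (fun a b => (hγ a b).star) hγ hG (hGinv z hz)
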